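/- Let Δ_ℕ = {p : ℕ → ℝ : p(n) ≥ 0 for all n, and Σ_{n∈ℕ} p(n) = 1} be the convex set of probability densities on ℕ, and for p ∈ Δ_ℕ let supp(p) = {n ∈ ℕ : p(n) > 0}. Then for every p ∈ Δ_ℕ: (1) the face of Δ_ℕ generated by p is F_{Δ_ℕ}(p) = {q ∈ Δ_ℕ : supp(q) ⊆ supp(p) and sup_{n∈supp(p)} q(n)/p(n) < ∞}; (2) the relative algebraic interior of this face is ri(F_{Δ_ℕ}(p)) = {q ∈ F_{Δ_ℕ}(p) : inf_{n∈supp(p)} q(n)/p(n) > 0}. -/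

import Mathlib

variable {V : Type*} [AddCommGroup V] [Module ℝ V]

/-- `E` is an extreme subset of `K`: whenever a point of `E` is written as
`(1-l)•y + l•z` with `y, z ∈ K` and `l ∈ (0,1)`, both `y` and `z` lie in `E`. -/
def IsExtremeSubset (K E : Set V) : Prop :=
  E ⊆ K ∧ ∀ x ∈ E, ∀ y ∈ K, ∀ z ∈ K, ∀ l : ℝ, l ∈ Set.Ioo (0:ℝ) 1 →
    x = (1 - l) • y + l • z → y ∈ E ∧ z ∈ E

/-- `F` is a face of `K`: a convex extreme subset of `K`. -/
def IsFaceOf (K F : Set V) : Prop := Convex ℝ F ∧ IsExtremeSubset K F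

/-- The face of `K` generated by `x`: the smallest face of `K` containing `x`
(the intersection of all faces of `K` containing `x`). -/
def genFace (K : Set V) (x : V) : Set V := ⋂₀ {F | IsFaceOf K F ∧ x ∈ F}

/-- The relative algebraic interior of `C`: all `x ∈ C` such that for every
`y` in the affine hull of `C` there is `ε > 0` with `x ± ε(y - x) ∈ C`. -/
def riSet (C : Set V) : Set V :=
  {x | x ∈ C ∧ ∀ y ∈ affineSpan ℝ C, ∃ ε : ℝ, 0 < ε ∧
    x + ε • (y - x) ∈ C ∧ x - ε • (y - x) ∈ C}

/-- The set of probability densities on `ℕ`. -/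
def probDensities : Set (ℕ → ℝ) :=
  {p | (∀ n, 0 ≤ p n) ∧ Summable p ∧ ∑' n, p n = 1}

/-!
For a convex set `K` and `x ∈ K`, the directions in which `K` can be entered from `x` form a convex
cone, and it grows when `x` moves further inside `K`. Hence the points `y ∈ K` whose segment to `x`
can be prolonged beyond `x` within `K` form a face, visibly the smallest one through `x`; likewise
`y` is relatively interior to that face exactly when the segment from `x` to `y` can be prolonged
beyond `y`. When `K` consists of the nonnegative points of an affine subspace of an ordered vector
space, the segment from `y` can be prolonged beyond `x` if and only if `x` dominates a positive
multiple of `y`; for densities this is a bound on the ratio of `y` to `x`.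
-/

section FeasibleDirections

/-- The directions feasible for `K` at `x`. Only one point of the open ray from `x` need lie
in `K`; for convex `K` containing `x` this yields an initial segment. For `y ∈ K`, the direction
`x - y` is feasible at `x` when the segment from `y` to `x` can be prolonged beyond `x` in `K`. -/
def feasibleDirections (K : Set V) (x : V) : Set V :=
  {d | ∃ ε : ℝ, 0 < ε ∧ x + ε • d ∈ K}

variable {K : Set V} {x y d e : V}

theorem sub_mem_feasibleDirections (hy : y ∈ K) : y - x ∈ feasibleDirections K x :=
  ⟨1, one_pos, by rwa [one_smul, add_sub_cancel]⟩

theorem smul_mem_feasibleDirections {c : ℝ} (hc : 0 < c) (hd : d ∈ feasibleDirections K x) :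
    c • d ∈ feasibleDirections K x := by
  obtain ⟨ε, hε, hεK⟩ := hd
  exact ⟨ε / c, div_pos hε hc, by rwa [smul_smul, div_mul_cancel₀ _ hc.ne']⟩

theorem add_smul_mem_of_le (hK : Convex ℝ K) (hx : x ∈ K) {δ ε : ℝ} (hδ : 0 ≤ δ) (hδε : δ ≤ ε)
    (hε : x + ε • d ∈ K) : x + δ • d ∈ K := by
  have hmem : x + (δ / ε) • ε • d ∈ K :=
    hK.add_smul_mem hx hε ⟨div_nonneg hδ (hδ.trans hδε), div_le_one_of_le₀ hδε (hδ.trans hδε)⟩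
  rwa [smul_smul, div_mul_cancel_of_imp fun h => le_antisymm (h ▸ hδε) hδ] at hmem

theorem exists_common_step (hK : Convex ℝ K) (hx : x ∈ K) (hd : d ∈ feasibleDirections K x)
    (he : e ∈ feasibleDirections K x) :
    ∃ ε : ℝ, 0 < ε ∧ x + ε • d ∈ K ∧ x + ε • e ∈ K := by
  obtain ⟨δ, hδ, hδK⟩ := hd
  obtain ⟨ε, hε, hεK⟩ := he
  have hmin : 0 < min δ ε := lt_min hδ hε
  exact ⟨min δ ε, hmin, add_smul_mem_of_le hK hx hmin.le (min_le_left _ _) hδK,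
    add_smul_mem_of_le hK hx hmin.le (min_le_right _ _) hεK⟩

theorem add_mem_feasibleDirections (hK : Convex ℝ K) (hx : x ∈ K)
    (hd : d ∈ feasibleDirections K x) (he : e ∈ feasibleDirections K x) :
    d + e ∈ feasibleDirections K x := by
  obtain ⟨ε, hε, hdK, heK⟩ := exists_common_step hK hx hd he
  refine ⟨ε / 2, half_pos hε, ?_⟩
  convert hK hdK heK one_half_pos.le one_half_pos.le (add_halves 1) using 1
  module

/-- The feasible directions of a convex set at one of its points, bundled as a pointed cone, so that
its lineality space describes the directions feasible in both senses. -/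
def feasibleCone (hK : Convex ℝ K) (hx : x ∈ K) : PointedCone ℝ V :=
  ConvexCone.toPointedCone
    { carrier := feasibleDirections K x
      smul_mem' := fun _ hc _ hd => smul_mem_feasibleDirections hc hd
      add_mem' := fun _ hd _ he => add_mem_feasibleDirections hK hx hd he }
    ⟨1, one_pos, by rwa [smul_zero, add_zero]⟩

theorem mem_feasibleCone (hK : Convex ℝ K) (hx : x ∈ K) :
    d ∈ feasibleCone hK hx ↔ d ∈ feasibleDirections K x :=
  Iff.rfl

theorem feasibleDirections_subset (hK : Convex ℝ K) (h : y - x ∈ feasibleDirections K y) :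
    feasibleDirections K x ⊆ feasibleDirections K y := by
  rintro d ⟨s, hs, hsK⟩
  obtain ⟨t, ht, htK⟩ := h
  refine ⟨t * s / (1 + t), by positivity, ?_⟩
  have hsum : 1 / (1 + t) + t / (1 + t) = 1 := by field_simp
  convert hK htK hsK (by positivity) (by positivity) hsum using 1
  match_scalars <;> field_simp
  ring

theorem sub_mem_feasibleDirections_trans {z : V} (hK : Convex ℝ K) (hz : z ∈ K)
    (hyx : x - y ∈ feasibleDirections K x) (hxz : z - x ∈ feasibleDirections K z) :
    z - y ∈ feasibleDirections K z := by
  rw [← sub_add_sub_cancel z x y]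
  exact add_mem_feasibleDirections hK hz hxz (feasibleDirections_subset hK hxz hyx)

theorem sub_left_mem_feasibleDirections_of_combo {u v : V} (hv : v ∈ K) {a b : ℝ} (ha : 0 < a)
    (hb : 0 < b) (hab : a + b = 1) :
    a • u + b • v - u ∈ feasibleDirections K (a • u + b • v) := by
  refine ⟨a / b, div_pos ha hb, ?_⟩
  obtain rfl : a = 1 - b := eq_sub_of_add_eq hab
  convert hv using 1
  match_scalars <;> field_simp <;> ring

end FeasibleDirections

section Faces

variable {K E : Set V} {x y z : V}

theorem IsExtremeSubset.endpoints_mem (hE : IsExtremeSubset K E) (hy : y ∈ E) (hz : z ∈ K) {ε : ℝ}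
    (hε : 0 < ε) (hw : y + ε • (y - z) ∈ K) : z ∈ E ∧ y + ε • (y - z) ∈ E := by
  have hε1 : 0 < 1 + ε := by positivity
  refine hE.2 y hy z hz _ hw (1 / (1 + ε))
    ⟨by positivity, (div_lt_one hε1).2 (lt_add_of_pos_right 1 hε)⟩ ?_
  match_scalars <;> field_simp
  ring

theorem convex_setOf_sub_mem_feasibleDirections (hK : Convex ℝ K) (hx : x ∈ K) :
    Convex ℝ {y ∈ K | x - y ∈ feasibleDirections K x} := by
  rintro y ⟨hy, hxy⟩ z ⟨hz, hxz⟩ a b ha hb hab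
  refine ⟨hK hy hz ha hb hab, ?_⟩
  have hcombo : x - (a • y + b • z) = a • (x - y) + b • (x - z) := by
    obtain rfl : a = 1 - b := eq_sub_of_add_eq hab
    module
  rw [hcombo]
  exact (feasibleCone hK hx).convex hxy hxz ha hb hab

theorem isFaceOf_setOf_sub_mem_feasibleDirections (hK : Convex ℝ K) (hx : x ∈ K) :
    IsFaceOf K {y ∈ K | x - y ∈ feasibleDirections K x} := by
  refine ⟨convex_setOf_sub_mem_feasibleDirections hK hx, fun _ hy => hy.1, ?_⟩
  rintro _ ⟨-, hxy⟩ u hu v hv l ⟨hl0, hl1⟩ rfl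
  have hl : 0 < 1 - l := sub_pos.2 hl1
  refine ⟨⟨hu, sub_mem_feasibleDirections_trans hK hx ?_ hxy⟩,
    ⟨hv, sub_mem_feasibleDirections_trans hK hx ?_ hxy⟩⟩
  · exact sub_left_mem_feasibleDirections_of_combo hv hl hl0 (sub_add_cancel 1 l)
  · rw [add_comm]
    exact sub_left_mem_feasibleDirections_of_combo hu hl0 hl (add_sub_cancel l 1)

theorem genFace_eq_setOf_sub_mem_feasibleDirections (hK : Convex ℝ K) (hx : x ∈ K) :
    genFace K x = {y ∈ K | x - y ∈ feasibleDirections K x} := by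
  apply Set.Subset.antisymm
  · exact Set.sInter_subset_of_mem
      ⟨isFaceOf_setOf_sub_mem_feasibleDirections hK hx, hx, sub_mem_feasibleDirections hx⟩
  · rintro y ⟨hy, ε, hε, hεK⟩ F ⟨hF, hxF⟩
    exact (hF.2.endpoints_mem hxF hy hε hεK).1

theorem isFaceOf_genFace (hK : Convex ℝ K) (hx : x ∈ K) : IsFaceOf K (genFace K x) := by
  rw [genFace_eq_setOf_sub_mem_feasibleDirections hK hx]
  exact isFaceOf_setOf_sub_mem_feasibleDirections hK hx

theorem self_mem_genFace (K : Set V) (x : V) : x ∈ genFace K x :=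
  fun _ hF => hF.2

theorem mem_riSet_iff {C : Set V} (hC : Convex ℝ C) :
    x ∈ riSet C ↔ x ∈ C ∧ ∀ y ∈ C, x - y ∈ feasibleDirections C x := by
  constructor
  · rintro ⟨hx, h⟩
    refine ⟨hx, fun y hy => ?_⟩
    obtain ⟨ε, hε, -, hεC⟩ := h y (subset_affineSpan ℝ C hy)
    exact ⟨ε, hε, by rwa [← neg_sub y x, smul_neg, ← sub_eq_add_neg]⟩
  · rintro ⟨hx, h⟩
    refine ⟨hx, fun y hy => ?_⟩
    -- The directions feasible in both senses form a linear subspace, so it suffices to have the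
    -- differences `z - x` with `z ∈ C` among them to reach the whole affine hull.
    have hlineal : ∀ z ∈ C, z - x ∈ (feasibleCone hC hx).lineal := fun z hz => by
      rw [PointedCone.mem_lineal, neg_sub, mem_feasibleCone, mem_feasibleCone]
      exact ⟨sub_mem_feasibleDirections hz, h z hz⟩
    have hspan : affineSpan ℝ C ≤ AffineSubspace.mk' x (feasibleCone hC hx).lineal :=
      affineSpan_le_of_subset_coe hlineal
    obtain ⟨hpos, hneg⟩ := PointedCone.mem_lineal.1 (hspan hy)
    obtain ⟨ε, hε, hadd, hsub⟩ := exists_common_step hC hx hpos hneg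
    exact ⟨ε, hε, hadd, by rwa [smul_neg, ← sub_eq_add_neg] at hsub⟩

theorem IsExtremeSubset.sub_mem_feasibleDirections_iff (hE : IsExtremeSubset K E) (hy : y ∈ E)
    (hz : z ∈ K) : y - z ∈ feasibleDirections E y ↔ y - z ∈ feasibleDirections K y :=
  ⟨fun ⟨ε, hε, hεE⟩ => ⟨ε, hε, hE.1 hεE⟩,
    fun ⟨ε, hε, hεK⟩ => ⟨ε, hε, (hE.endpoints_mem hy hz hε hεK).2⟩⟩

theorem riSet_genFace (hK : Convex ℝ K) (hx : x ∈ K) :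
    riSet (genFace K x) = {y ∈ genFace K x | y - x ∈ feasibleDirections K y} := by
  obtain ⟨hconv, hext⟩ := isFaceOf_genFace hK hx
  ext y
  rw [mem_riSet_iff hconv]
  refine and_congr_right fun hy => ⟨fun h => ?_, fun h z hz => ?_⟩
  · exact (hext.sub_mem_feasibleDirections_iff hy hx).1 (h x (self_mem_genFace K x))
  · have hxz : x - z ∈ feasibleDirections K x :=
      (genFace_eq_setOf_sub_mem_feasibleDirections hK hx ▸ hz).2
    exact (hext.sub_mem_feasibleDirections_iff hy (hext.1 hz)).2
      (sub_mem_feasibleDirections_trans hK (hext.1 hy) hxz h)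

end Faces

section NonnegativePoints

variable [PartialOrder V] [IsOrderedAddMonoid V] [PosSMulMono ℝ V] {A : AffineSubspace ℝ V}
  {x y : V}

theorem convex_inter_Ici_zero (A : AffineSubspace ℝ V) : Convex ℝ (A ∩ Set.Ici 0 : Set V) :=
  A.convex.inter (convex_Ici 0)

theorem sub_mem_feasibleDirections_inter_Ici_zero_iff (hx : x ∈ (A ∩ Set.Ici 0 : Set V))
    (hy : y ∈ A) :
    x - y ∈ feasibleDirections (A ∩ Set.Ici 0 : Set V) x ↔ ∃ c : ℝ, 0 < c ∧ c • y ≤ x := by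
  have hexpand (ε : ℝ) : x + ε • (x - y) = (1 + ε) • x - ε • y := by module
  constructor
  · rintro ⟨ε, hε, -, hnonneg⟩
    have hε1 : 0 < 1 + ε := by positivity
    rw [Set.mem_Ici, hexpand, sub_nonneg] at hnonneg
    refine ⟨(1 + ε)⁻¹ * ε, by positivity, ?_⟩
    rw [mul_smul]
    exact (inv_smul_le_iff_of_pos hε1).2 hnonneg
  · rintro ⟨c, hc, hcy⟩
    refine ⟨c, hc, ?_, ?_⟩
    · rw [add_comm]
      exact A.smul_vsub_vadd_mem c hx.1 hy hx.1
    · rw [Set.mem_Ici, hexpand, sub_nonneg, add_smul, one_smul]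
      exact hcy.trans (le_add_of_nonneg_right (smul_nonneg hc.le hx.2))

theorem genFace_inter_Ici_zero (hx : x ∈ (A ∩ Set.Ici 0 : Set V)) :
    genFace (A ∩ Set.Ici 0 : Set V) x =
      {y ∈ (A ∩ Set.Ici 0 : Set V) | ∃ c : ℝ, 0 < c ∧ c • y ≤ x} := by
  rw [genFace_eq_setOf_sub_mem_feasibleDirections (convex_inter_Ici_zero A) hx]
  ext y
  exact and_congr_right fun hy => sub_mem_feasibleDirections_inter_Ici_zero_iff hx hy.1

theorem riSet_genFace_inter_Ici_zero (hx : x ∈ (A ∩ Set.Ici 0 : Set V)) :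
    riSet (genFace (A ∩ Set.Ici 0 : Set V) x) =
      {y ∈ genFace (A ∩ Set.Ici 0 : Set V) x | ∃ c : ℝ, 0 < c ∧ c • x ≤ y} := by
  rw [riSet_genFace (convex_inter_Ici_zero A) hx]
  ext y
  refine and_congr_right fun hy => sub_mem_feasibleDirections_inter_Ici_zero_iff ?_ hx.1
  exact (isFaceOf_genFace (convex_inter_Ici_zero A) hx).2.1 hy

end NonnegativePoints

section Densities

variable {ι : Type*} {f g : ι → ℝ}

theorem smul_le_iff_forall_le_div (hf : 0 ≤ f) (hg : 0 ≤ g) {c : ℝ} :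
    c • f ≤ g ↔ ∀ i, 0 < f i → c ≤ g i / f i := by
  refine forall_congr' fun i => ⟨fun h hi => (le_div_iff₀ hi).2 h, fun h => ?_⟩
  rcases (hf i).eq_or_lt with hi | hi
  · simpa only [Pi.smul_apply, smul_eq_mul, ← hi, Pi.zero_apply, mul_zero] using hg i
  · exact (le_div_iff₀ hi).1 (h hi)

theorem exists_smul_le_iff_exists_div_le (hf : 0 ≤ f) (hg : 0 ≤ g) :
    (∃ c : ℝ, 0 < c ∧ c • g ≤ f) ↔
      (∀ i, 0 < g i → 0 < f i) ∧ ∃ M : ℝ, ∀ i, 0 < f i → g i / f i ≤ M := by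
  constructor
  · rintro ⟨c, hc, hcg⟩
    refine ⟨fun i hi => (mul_pos hc hi).trans_le (hcg i), c⁻¹, fun i hi => ?_⟩
    rw [div_le_iff₀ hi, ← div_eq_inv_mul, le_div_iff₀' hc]
    exact hcg i
  · rintro ⟨hsupp, M, hM⟩
    have hM' : 0 < max M 1 := lt_max_of_lt_right one_pos
    refine ⟨(max M 1)⁻¹, inv_pos.2 hM', (smul_le_iff_forall_le_div hg hf).2 fun i hi => ?_⟩
    rw [← inv_div]
    exact inv_anti₀ (div_pos hi (hsupp i hi)) ((hM i (hsupp i hi)).trans (le_max_left M 1))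

/-- The affine subspace of real families that are unconditionally summable with sum `1`. -/
def unitSum (ι : Type*) : AffineSubspace ℝ (ι → ℝ) where
  carrier := {f | HasSum f 1}
  smul_vsub_vadd_mem' c f g h hf hg hh := by
    have hsum := ((HasSum.sub hf hg).mul_left c).add hh
    rwa [sub_self, mul_zero, zero_add] at hsum

/-- The probability densities on an arbitrary index type, generalizing `probDensities`. -/
def densities (ι : Type*) : Set (ι → ℝ) :=
  {p | (∀ i, 0 ≤ p i) ∧ Summable p ∧ ∑' i, p i = 1}

theorem densities_eq_unitSum_inter_Ici_zero (ι : Type*) :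
    densities ι = (unitSum ι ∩ Set.Ici 0 : Set (ι → ℝ)) := by
  ext p
  exact ⟨fun ⟨hnonneg, hs, h1⟩ => ⟨hs.hasSum_iff.2 h1, hnonneg⟩,
    fun ⟨h1, hnonneg⟩ => ⟨hnonneg, h1.summable, h1.tsum_eq⟩⟩

theorem stmt18_general (p : ι → ℝ) (hp : p ∈ densities ι) :
    genFace (densities ι) p =
      {q ∈ densities ι | (∀ i, 0 < q i → 0 < p i) ∧
        ∃ M : ℝ, ∀ i, 0 < p i → q i / p i ≤ M} ∧
    riSet (genFace (densities ι) p) =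
      {q ∈ genFace (densities ι) p | ∃ c : ℝ, 0 < c ∧ ∀ i, 0 < p i → c ≤ q i / p i} := by
  rw [densities_eq_unitSum_inter_Ici_zero] at hp ⊢
  rw [riSet_genFace_inter_Ici_zero hp, genFace_inter_Ici_zero hp]
  constructor <;> ext q
  · exact and_congr_right fun hq => exists_smul_le_iff_exists_div_le hp.2 hq.2
  · exact and_congr_right fun hq => exists_congr fun c =>
      and_congr_right fun _ => smul_le_iff_forall_le_div hp.2 hq.1.2

end Densities

theorem stmt18 (p : ℕ → ℝ) (hp : p ∈ probDensities) :
    genFace probDensities p =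
      {q ∈ probDensities | (∀ n, 0 < q n → 0 < p n) ∧
        ∃ M : ℝ, ∀ n, 0 < p n → q n / p n ≤ M} ∧
    riSet (genFace probDensities p) =
      {q ∈ genFace probDensities p | ∃ c : ℝ, 0 < c ∧ ∀ n, 0 < p n → c ≤ q n / p n} :=
  stmt18_general p hp
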